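/- Let N ≥ 2, s ∈ (0,1), and let Ω ⊂ ℝ^N be a bounded Lipschitz domain. Then H̃^s_{Ω,0} := {u ∈ H^s_{Ω,0} : (𝒩_s u)(x) = 0 for a.e. x ∈ Ω^c} is a linear subspace of H^s_{Ω,0} (with functions identified a.e.) which is closed with respect to the norm u ↦ ‖u‖_{L²(Ω)} + [u]_{H^s_{Ω,0}}: if u_k ∈ H̃^s_{Ω,0} and ‖u_k − u‖_{L²(Ω)} + [u_k − u]_{H^s_{Ω,0}} → 0 for some u ∈ H^s_{Ω,0}, then u ∈ H̃^s_{Ω,0}. -/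

import Mathlib

open MeasureTheory Filter Topology Bornology Set
open scoped ENNReal NNReal

noncomputable section

namespace FracNeumann

abbrev Euc (N : ℕ) : Type := EuclideanSpace ℝ (Fin N)

/-- The kernel weight `|x - y| ^ (N + 2s)`. -/
def kern (N : ℕ) (s : ℝ) (x y : Euc N) : ℝ := ‖x - y‖ ^ ((N : ℝ) + 2 * s)

/-- The region `ℝ^{2N} \ (Ω^c × Ω^c)`, where `Ω^c := ℝ^N \ closure Ω`. -/
def reg (N : ℕ) (Ω : Set (Euc N)) : Set (Euc N × Euc N) :=
  {q | q.1 ∈ closure Ω ∨ q.2 ∈ closure Ω}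

/-- The squared seminorm `[u]_{H^s_{Ω,0}}²`, as an extended real number. -/
def semiSq (N : ℕ) (s : ℝ) (Ω : Set (Euc N)) (u : Euc N → ℝ) : ℝ≥0∞ :=
  ∫⁻ q in reg N Ω, ENNReal.ofReal ((u q.1 - u q.2) ^ 2 / kern N s q.1 q.2)

/-- `∫_Ω u²`, as an extended real number. -/
def l2sq (N : ℕ) (Ω : Set (Euc N)) (u : Euc N → ℝ) : ℝ≥0∞ :=
  ∫⁻ x in Ω, ENNReal.ofReal ((u x) ^ 2)

/-- Membership in `H^s_{Ω,0}`. -/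
def memHs (N : ℕ) (s : ℝ) (Ω : Set (Euc N)) (u : Euc N → ℝ) : Prop :=
  Measurable u ∧ l2sq N Ω u < ⊤ ∧ semiSq N s Ω u < ⊤

/-- The squared Gagliardo seminorm `[u]_{H^s(Ω)}²`. -/
def semiSqOn (N : ℕ) (s : ℝ) (Ω : Set (Euc N)) (u : Euc N → ℝ) : ℝ≥0∞ :=
  ∫⁻ q in Ω ×ˢ Ω, ENNReal.ofReal ((u q.1 - u q.2) ^ 2 / kern N s q.1 q.2)

/-- Membership in `H^s(Ω)` (for functions defined on all of `ℝ^N`). -/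
def memHsOn (N : ℕ) (s : ℝ) (Ω : Set (Euc N)) (u : Euc N → ℝ) : Prop :=
  Measurable u ∧ l2sq N Ω u < ⊤ ∧ semiSqOn N s Ω u < ⊤

/-- The normalizing constant `c_{N,s}` of the fractional Laplacian. -/
def cNs (N : ℕ) (s : ℝ) : ℝ :=
  (4 : ℝ) ^ s * s * Real.Gamma ((N : ℝ) / 2 + s) /
    (Real.pi ^ ((N : ℝ) / 2) * Real.Gamma (1 - s))

/-- The nonlocal Neumann derivative `𝒩_s u`. -/
def Nneu (N : ℕ) (s : ℝ) (Ω : Set (Euc N)) (u : Euc N → ℝ) (x : Euc N) : ℝ :=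
  cNs N s * ∫ y in Ω, (u x - u y) / kern N s x y

/-- Membership in `H̃^s_{Ω,0}`: members of `H^s_{Ω,0}` with `𝒩_s u = 0` a.e. in `Ω^c`. -/
def memHsTilde (N : ℕ) (s : ℝ) (Ω : Set (Euc N)) (u : Euc N → ℝ) : Prop :=
  memHs N s Ω u ∧ ∀ᵐ x ∂(volume.restrict (closure Ω)ᶜ), Nneu N s Ω u x = 0

/-- The first nontrivial Neumann eigenvalue `μ₁^{(s)}(Ω)`. -/
def mu1 (N : ℕ) (s : ℝ) (Ω : Set (Euc N)) : ℝ :=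
  sInf {t : ℝ | ∃ u : Euc N → ℝ, memHs N s Ω u ∧ (∫ x in Ω, (u x) ^ 2) = 1 ∧
    (∫ x in Ω, u x) = 0 ∧ t = cNs N s / 2 * (semiSq N s Ω u).toReal}

/-- The bilinear form (without the constant). -/
def bform (N : ℕ) (s : ℝ) (Ω : Set (Euc N)) (u v : Euc N → ℝ) : ℝ :=
  ∫ q in reg N Ω, (u q.1 - u q.2) * (v q.1 - v q.2) / kern N s q.1 q.2

/-- First nontrivial eigenfunction: weak solution associated to `μ₁^{(s)}(Ω)`. -/
def IsFirstEigen (N : ℕ) (s : ℝ) (Ω : Set (Euc N)) (u : Euc N → ℝ) : Prop :=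
  memHs N s Ω u ∧ ¬ (u =ᵐ[volume.restrict Ω] 0) ∧ (∫ x in Ω, u x) = 0 ∧
    ∀ v : Euc N → ℝ, memHs N s Ω v →
      cNs N s / 2 * bform N s Ω u v = mu1 N s Ω * ∫ x in Ω, u x * v x

/-- Reflection `σ_e(x) = x - 2(x·e)e` across the hyperplane `{x·e = 0}`. -/
def reflect (N : ℕ) (e x : Euc N) : Euc N := x - (2 * (inner ℝ x e : ℝ)) • e

/-- The polarization `P_e u` with respect to the hyperplane `{x·e = 0}`. -/
def polarize (N : ℕ) (e : Euc N) (u : Euc N → ℝ) (x : Euc N) : ℝ :=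
  if 0 ≤ (inner ℝ x e : ℝ) then min (u x) (u (reflect N e x))
  else max (u x) (u (reflect N e x))

/-- Foliated Schwarz symmetry with respect to `p`. -/
def FoliatedSchwarz (N : ℕ) (p : Euc N) (u : Euc N → ℝ) : Prop :=
  ∃ uh : ℝ → ℝ → ℝ, (∀ r : ℝ, AntitoneOn (uh r) (Icc 0 Real.pi)) ∧
    ∀ x : Euc N, x ≠ 0 → u x = uh ‖x‖ (Real.arccos ((inner ℝ x p : ℝ) / ‖x‖))

/-- Radial symmetry (pointwise). -/
def Radial (N : ℕ) (u : Euc N → ℝ) : Prop := ∃ f : ℝ → ℝ, ∀ x, u x = f ‖x‖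

/-- Radial symmetry (a.e.). -/
def RadialAE (N : ℕ) (u : Euc N → ℝ) : Prop :=
  ∃ f : ℝ → ℝ, ∀ᵐ x : Euc N ∂volume, u x = f ‖x‖

/-- The set `{x ∈ Ω : u x ≠ 0}` has exactly two connected components. -/
def TwoNodal (N : ℕ) (Ω : Set (Euc N)) (u : Euc N → ℝ) : Prop :=
  Nat.card (ConnectedComponents {x : Euc N // x ∈ Ω ∧ u x ≠ 0}) = 2

/-- Bounded Lipschitz domain: open, bounded, connected, and near every boundary point the set
is the region above the graph of a Lipschitz function in some direction `e`. -/
def IsLipschitzDomain (N : ℕ) (Ω : Set (Euc N)) : Prop :=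
  IsOpen Ω ∧ IsBounded Ω ∧ IsConnected Ω ∧
    ∀ x ∈ frontier Ω, ∃ e : Euc N, ‖e‖ = 1 ∧ ∃ r : ℝ, 0 < r ∧
      ∃ (L : NNReal) (f : Euc N → ℝ), LipschitzWith L f ∧
        ∀ y ∈ Metric.ball x r,
          (y ∈ Ω ↔ f (y - ((inner ℝ y e : ℝ)) • e) < (inner ℝ y e : ℝ))

/-- `g` is a weak gradient of `u` in `Ω`, square-integrable on `Ω`. -/
def IsWeakGradient (N : ℕ) (Ω : Set (Euc N)) (u : Euc N → ℝ) (g : Euc N → Euc N) : Prop :=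
  Measurable g ∧ (∫⁻ x in Ω, ENNReal.ofReal (‖g x‖ ^ 2)) < ⊤ ∧
    ∀ φ : Euc N → ℝ, ContDiff ℝ (⊤ : ℕ∞) φ → HasCompactSupport φ → tsupport φ ⊆ Ω →
      ∀ i : Fin N, (∫ x in Ω, u x * fderiv ℝ φ x (EuclideanSpace.single i 1)) =
        - ∫ x in Ω, g x i * φ x

/-- Membership in `H¹(Ω)`. -/
def memH1 (N : ℕ) (Ω : Set (Euc N)) (u : Euc N → ℝ) : Prop :=
  Measurable u ∧ l2sq N Ω u < ⊤ ∧ ∃ g, IsWeakGradient N Ω u g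

/-- `∫_Ω |∇u|²`, as an extended real number. -/
def gradSq (N : ℕ) (Ω : Set (Euc N)) (u : Euc N → ℝ) : ℝ≥0∞ :=
  ⨅ (g : Euc N → Euc N) (_ : IsWeakGradient N Ω u g), ∫⁻ x in Ω, ENNReal.ofReal (‖g x‖ ^ 2)

/-- Rayleigh quotient for the fractional Neumann problem. -/
def rayleighS (N : ℕ) (s : ℝ) (Ω : Set (Euc N)) (u : Euc N → ℝ) : ℝ≥0∞ :=
  ENNReal.ofReal (cNs N s / 2) * semiSq N s Ω u / l2sq N Ω u

/-- Rayleigh quotient for the local Neumann problem. -/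
def rayleigh1 (N : ℕ) (Ω : Set (Euc N)) (u : Euc N → ℝ) : ℝ≥0∞ :=
  gradSq N Ω u / l2sq N Ω u

/-- The min-max value `μ_n^{(s)}(Ω)` over `n`-dimensional subspaces of `H^s_{Ω,0} ∩ L²₀(Ω)`. -/
def muNs (N : ℕ) (s : ℝ) (Ω : Set (Euc N)) (n : ℕ) : ℝ≥0∞ :=
  ⨅ (A : Submodule ℝ (Euc N → ℝ)) (_ : Module.finrank ℝ A = n ∧
      (∀ u ∈ A, memHs N s Ω u ∧ (∫ x in Ω, u x) = 0) ∧
      (∀ u ∈ A, u =ᵐ[(volume : Measure (Euc N))] 0 → u = 0)),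
    ⨆ (u : Euc N → ℝ) (_ : u ∈ A ∧ u ≠ 0), rayleighS N s Ω u

/-- The min-max value over `n`-dimensional subspaces of `H̃^s_{Ω,0} ∩ L²₀(Ω)`. -/
def muNsTilde (N : ℕ) (s : ℝ) (Ω : Set (Euc N)) (n : ℕ) : ℝ≥0∞ :=
  ⨅ (A : Submodule ℝ (Euc N → ℝ)) (_ : Module.finrank ℝ A = n ∧
      (∀ u ∈ A, memHsTilde N s Ω u ∧ (∫ x in Ω, u x) = 0) ∧
      (∀ u ∈ A, u =ᵐ[(volume : Measure (Euc N))] 0 → u = 0)),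
    ⨆ (u : Euc N → ℝ) (_ : u ∈ A ∧ u ≠ 0), rayleighS N s Ω u

/-- The min-max value `μ_n^{(1)}(Ω)` over `n`-dimensional subspaces of `H¹(Ω) ∩ L²₀(Ω)`. -/
def muN1 (N : ℕ) (Ω : Set (Euc N)) (n : ℕ) : ℝ≥0∞ :=
  ⨅ (A : Submodule ℝ (Euc N → ℝ)) (_ : Module.finrank ℝ A = n ∧
      (∀ u ∈ A, memH1 N Ω u ∧ (∫ x in Ω, u x) = 0) ∧
      (∀ u ∈ A, u =ᵐ[volume.restrict Ω] 0 → u = 0)),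
    ⨆ (u : Euc N → ℝ) (_ : u ∈ A ∧ u ≠ 0), rayleigh1 N Ω u

/-- `μ_n^{(s)}(Ω)` including `μ₀^{(s)}(Ω) := 0`. -/
def muNsFull (N : ℕ) (s : ℝ) (Ω : Set (Euc N)) (n : ℕ) : ℝ≥0∞ :=
  if n = 0 then 0 else muNs N s Ω n

/-- `μ_n^{(1)}(Ω)` including `μ₀^{(1)}(Ω) := 0`. -/
def muN1Full (N : ℕ) (Ω : Set (Euc N)) (n : ℕ) : ℝ≥0∞ :=
  if n = 0 then 0 else muN1 N Ω n

/-- The squared `H^s_{Ω,0}`-seminorm of the `s`-minimal extension of `u`: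
the minimal value of `[v]²` over `v ∈ H^s_{Ω,0}` with `v = u` a.e. in `Ω`. -/
def minExtSemiSq (N : ℕ) (s : ℝ) (Ω : Set (Euc N)) (u : Euc N → ℝ) : ℝ≥0∞ :=
  ⨅ (v : Euc N → ℝ) (_ : memHs N s Ω v ∧ v =ᵐ[volume.restrict Ω] u), semiSq N s Ω v

/-- `ω_{N-1}`: volume of the unit ball of `ℝ^{N-1}`. -/
def omegaPrev (N : ℕ) : ℝ := (volume (Metric.ball (0 : Euc (N - 1)) 1)).toReal

/-- Membership in `L²₀(Ω)`. -/
def memL20 (N : ℕ) (Ω : Set (Euc N)) (u : Euc N → ℝ) : Prop :=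
  Measurable u ∧ l2sq N Ω u < ⊤ ∧ (∫ x in Ω, u x) = 0

/-- The functional `F_s` (value `+∞` outside `H^s(Ω)`). -/
def Fs (N : ℕ) (s : ℝ) (Ω : Set (Euc N)) (u : Euc N → ℝ) : ℝ≥0∞ :=
  ENNReal.ofReal (1 - s) * minExtSemiSq N s Ω u

/-- The functional `F₁` (value `+∞` outside `H¹(Ω)`). -/
def F1 (N : ℕ) (Ω : Set (Euc N)) (u : Euc N → ℝ) : ℝ≥0∞ :=
  ENNReal.ofReal (omegaPrev N / (2 * N)) * gradSq N Ω u

end FracNeumann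
namespace FracNeumann

/-!
Fix `x ∉ closure Ω` and write the integrand of `𝒩_s w (x)` as the product of
`(w x - w y) / |x - y| ^ ((N + 2s) / 2)` and `|x - y| ^ (-(N + 2s) / 2)`. By Cauchy–Schwarz,
`|𝒩_s w (x)|² ≤ c_{N,s}² E(x) K(x)` with `E(x) = ∫_Ω |w x - w y|² / |x - y| ^ (N + 2s) dy` and
`K(x) = ∫_Ω |x - y| ^ (-(N + 2s)) dy`, which is finite because `x` has positive distance from `Ω`
and `s > 0`. As `∫_{Ω^c} E ≤ [w]²`, the operator `𝒩_s` is linear and bounded from `H^s_{Ω,0}` to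
`L²(Ω^c, dx / K)`, and `H̃^s_{Ω,0}` is its kernel.
-/

section Analysis

variable {α : Type*} [MeasurableSpace α] {μ : Measure α}

lemma memLp_two_iff_lintegral_ofReal_sq_lt_top {f : α → ℝ} (hf : AEStronglyMeasurable f μ) :
    MemLp f 2 μ ↔ ∫⁻ x, ENNReal.ofReal (f x ^ 2) ∂μ < ⊤ := by
  rw [memLp_two_iff_integrable_sq hf, Integrable,
    and_iff_right (by fun_prop),
    hasFiniteIntegral_iff_ofReal (ae_of_all _ fun x => sq_nonneg (f x))]

lemma sq_lintegral_mul_le {f g : α → ℝ≥0∞} (hf : AEMeasurable f μ) (hg : AEMeasurable g μ) :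
    (∫⁻ x, f x * g x ∂μ) ^ 2 ≤ (∫⁻ x, f x ^ 2 ∂μ) * ∫⁻ x, g x ^ 2 ∂μ := by
  have hHolder := ENNReal.lintegral_mul_le_Lp_mul_Lq μ Real.HolderConjugate.two_two hf hg
  have sq_sqrt (a : ℝ≥0∞) : (a ^ (1 / 2 : ℝ)) ^ 2 = a := by
    rw [← ENNReal.rpow_natCast, ← ENNReal.rpow_mul]
    norm_num
  simpa only [Pi.mul_apply, mul_pow, sq_sqrt, ENNReal.rpow_two] using
    pow_le_pow_left₀ zero_le hHolder 2

lemma ae_restrict_compl_closure_notMem {X : Type*} [TopologicalSpace X] [MeasurableSpace X]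
    [OpensMeasurableSpace X] {μ : Measure X} {S : Set X} :
    ∀ᵐ x ∂μ.restrict (closure S)ᶜ, x ∉ closure S :=
  ae_restrict_mem isClosed_closure.measurableSet.compl

end Analysis

section Decay

lemma rpow_neg_le_mul_one_add_rpow_neg {d r t : ℝ} (hd : 0 < d) (hr : 0 ≤ r) (ht : d ≤ t) :
    t ^ (-r) ≤ ((1 + d) / d) ^ r * (1 + t) ^ (-r) := by
  have ht0 : 0 < t := hd.trans_le ht
  have hle : (1 + t) / t ≤ (1 + d) / d := by
    rw [div_le_div_iff₀ ht0 hd]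
    linarith
  calc t ^ (-r) = ((1 + t) / t) ^ r * (1 + t) ^ (-r) := by
        rw [Real.div_rpow (by positivity) ht0.le, Real.rpow_neg ht0.le,
          Real.rpow_neg (by positivity)]
        field_simp
    _ ≤ ((1 + d) / d) ^ r * (1 + t) ^ (-r) := by gcongr

variable {E : Type*} [NormedAddCommGroup E] [NormedSpace ℝ E] [FiniteDimensional ℝ E]
  [MeasurableSpace E] [BorelSpace E] {μ : Measure E} [μ.IsAddHaarMeasure]

lemma integrableOn_rpow_neg_norm_sub {r : ℝ} (hr : (Module.finrank ℝ E : ℝ) < r) {x : E}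
    {S : Set E} (hx : x ∉ closure S) : IntegrableOn (fun y => ‖x - y‖ ^ (-r)) S μ := by
  obtain ⟨d, hd, hSd⟩ : ∃ d > 0, ∀ y ∈ S, d ≤ ‖x - y‖ := by
    simpa only [Metric.mem_closure_iff, not_forall, not_exists, not_and, not_lt, dist_eq_norm,
      exists_prop] using hx
  have hr0 : 0 ≤ r := (Nat.cast_nonneg _).trans hr.le
  have hfar : MeasurableSet {y | d ≤ ‖x - y‖} := measurableSet_le (by fun_prop) (by fun_prop)
  have hbound : Integrable (fun y => ((1 + d) / d) ^ r * (1 + ‖x - y‖) ^ (-r)) μ :=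
    ((integrable_one_add_norm hr).comp_sub_left x).const_mul _
  have hmeas : Measurable fun y => ‖x - y‖ ^ (-r) := by fun_prop
  refine IntegrableOn.mono_set ?_ hSd
  refine hbound.integrableOn.mono' hmeas.aestronglyMeasurable
    ((ae_restrict_iff' hfar).2 (ae_of_all _ ?_))
  intro y hy
  rw [Real.norm_of_nonneg (by positivity)]
  exact rpow_neg_le_mul_one_add_rpow_neg hd hr0 hy

end Decay

section Neumann

variable {N : ℕ} {s : ℝ} {Ω : Set (Euc N)} {u v w : Euc N → ℝ}

lemma kern_nonneg (x y : Euc N) : 0 ≤ kern N s x y :=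
  Real.rpow_nonneg (norm_nonneg _) _

@[fun_prop]
lemma measurable_kern {α : Type*} [MeasurableSpace α] {f g : α → Euc N} (hf : Measurable f)
    (hg : Measurable g) : Measurable fun a => kern N s (f a) (g a) := by
  unfold kern
  fun_prop

/-- The weighted difference quotient `(u x - u y) / |x - y| ^ ((N + 2s) / 2)`. It is linear in `u`,
and its `L²` norm over `reg N Ω` is the seminorm of `H^s_{Ω,0}`. -/
def diffQuot (N : ℕ) (s : ℝ) (u : Euc N → ℝ) (x y : Euc N) : ℝ :=
  (u x - u y) / √(kern N s x y)

@[fun_prop]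
lemma measurable_diffQuot (hu : Measurable u) :
    Measurable fun q : Euc N × Euc N => diffQuot N s u q.1 q.2 := by
  unfold diffQuot
  fun_prop

lemma diffQuot_sq (u : Euc N → ℝ) (x y : Euc N) :
    diffQuot N s u x y ^ 2 = (u x - u y) ^ 2 / kern N s x y := by
  rw [diffQuot, div_pow, Real.sq_sqrt (kern_nonneg x y)]

lemma diffQuot_linearCombination (u v : Euc N → ℝ) (a b : ℝ) (x y : Euc N) :
    diffQuot N s (fun z => a * u z + b * v z) x y =
      a * diffQuot N s u x y + b * diffQuot N s v x y := by
  unfold diffQuot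
  ring

lemma memHs_iff_memLp : memHs N s Ω u ↔ Measurable u ∧ MemLp u 2 (volume.restrict Ω) ∧
    MemLp (fun q : Euc N × Euc N => diffQuot N s u q.1 q.2) 2 (volume.restrict (reg N Ω)) := by
  refine and_congr_right fun hu => ?_
  rw [memLp_two_iff_lintegral_ofReal_sq_lt_top hu.aestronglyMeasurable,
    memLp_two_iff_lintegral_ofReal_sq_lt_top (measurable_diffQuot hu).aestronglyMeasurable]
  simp only [diffQuot_sq, l2sq, semiSq]

lemma memHs.linearCombination (hu : memHs N s Ω u) (hv : memHs N s Ω v) (a b : ℝ) :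
    memHs N s Ω fun x => a * u x + b * v x := by
  rw [memHs_iff_memLp] at hu hv ⊢
  obtain ⟨hu_meas, hu_L2, hu_semi⟩ := hu
  obtain ⟨hv_meas, hv_L2, hv_semi⟩ := hv
  simp only [diffQuot_linearCombination]
  exact ⟨by fun_prop, (hu_L2.const_mul a).add (hv_L2.const_mul b),
    (hu_semi.const_mul a).add (hv_semi.const_mul b)⟩

lemma memHs.sub (hu : memHs N s Ω u) (hv : memHs N s Ω v) : memHs N s Ω fun x => u x - v x := by
  simpa [sub_eq_add_neg] using hu.linearCombination hv 1 (-1)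

/-- The energy density `∫_Ω |u x - u y|² / |x - y| ^ (N + 2s) dy` at `x`: the contribution of
`{x} × Ω` to the squared seminorm. -/
def energyDensity (N : ℕ) (s : ℝ) (Ω : Set (Euc N)) (u : Euc N → ℝ) (x : Euc N) : ℝ≥0∞ :=
  ∫⁻ y in Ω, ENNReal.ofReal (diffQuot N s u x y ^ 2)

/-- The kernel mass `∫_Ω |x - y| ^ (-(N + 2s)) dy` of `Ω` seen from `x`, whose reciprocal is the
weight of the `L²` space on `Ω^c` in which the Neumann derivative is bounded. -/
def kernMass (N : ℕ) (s : ℝ) (Ω : Set (Euc N)) (x : Euc N) : ℝ≥0∞ :=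
  ∫⁻ y in Ω, ENNReal.ofReal (kern N s x y)⁻¹

@[fun_prop]
lemma measurable_energyDensity (hu : Measurable u) : Measurable (energyDensity N s Ω u) :=
  Measurable.lintegral_prod_right'
    (f := fun q : Euc N × Euc N => ENNReal.ofReal (diffQuot N s u q.1 q.2 ^ 2)) (by fun_prop)

@[fun_prop]
lemma measurable_kernMass : Measurable (kernMass N s Ω) :=
  Measurable.lintegral_prod_right'
    (f := fun q : Euc N × Euc N => ENNReal.ofReal (kern N s q.1 q.2)⁻¹) (by fun_prop)

@[fun_prop]
lemma measurable_Nneu (hu : Measurable u) : Measurable (Nneu N s Ω u) := by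
  have hquot : Measurable fun q : Euc N × Euc N => (u q.1 - u q.2) / kern N s q.1 q.2 := by
    fun_prop
  exact hquot.stronglyMeasurable.integral_prod_right'.measurable.const_mul _

lemma lintegral_energyDensity_le_semiSq (hu : Measurable u) :
    ∫⁻ x in (closure Ω)ᶜ, energyDensity N s Ω u x ≤ semiSq N s Ω u := by
  have hmeas : Measurable fun q : Euc N × Euc N =>
      ENNReal.ofReal (diffQuot N s u q.1 q.2 ^ 2) := by fun_prop
  unfold energyDensity semiSq
  simp only [← diffQuot_sq]
  rw [← lintegral_prod _ hmeas.aemeasurable, Measure.prod_restrict]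
  exact lintegral_mono_set fun q hq => Or.inr (subset_closure hq.2)

lemma kernMass_lt_top (hs : 0 < s) {x : Euc N} (hx : x ∉ closure Ω) : kernMass N s Ω x < ⊤ := by
  have hdim : (Module.finrank ℝ (Euc N) : ℝ) < N + 2 * s := by
    rw [finrank_euclideanSpace_fin]
    linarith
  simpa only [kernMass, kern, Real.rpow_neg (norm_nonneg _)] using
    (integrableOn_rpow_neg_norm_sub (μ := volume) hdim hx).lintegral_lt_top

lemma sq_lintegral_enorm_div_kern_le (hu : Measurable u) (x : Euc N) :
    (∫⁻ y in Ω, ‖(u x - u y) / kern N s x y‖ₑ) ^ 2 ≤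
      energyDensity N s Ω u x * kernMass N s Ω x := by
  have henorm (y : Euc N) : ‖(u x - u y) / kern N s x y‖ₑ =
      ‖diffQuot N s u x y‖ₑ * ‖(√(kern N s x y))⁻¹‖ₑ := by
    rw [← enorm_mul, diffQuot, ← div_eq_mul_inv, div_div, Real.mul_self_sqrt (kern_nonneg x y)]
  have hmass (y : Euc N) : (kern N s x y)⁻¹ = (√(kern N s x y))⁻¹ ^ 2 := by
    rw [inv_pow, Real.sq_sqrt (kern_nonneg x y)]
  have hquot : Measurable fun y => diffQuot N s u x y :=
    (measurable_diffQuot hu).comp measurable_prodMk_left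
  have enorm_sq (t : ℝ) : ‖t‖ₑ ^ 2 = ENNReal.ofReal (t ^ 2) := by
    rw [← enorm_pow, Real.enorm_of_nonneg (sq_nonneg t)]
  simpa only [energyDensity, kernMass, henorm, hmass, enorm_sq] using
    sq_lintegral_mul_le (μ := volume.restrict Ω) hquot.enorm.aemeasurable
      (g := fun y => ‖(√(kern N s x y))⁻¹‖ₑ) (by fun_prop)

lemma enorm_Nneu_sq_le (hu : Measurable u) (x : Euc N) :
    ‖Nneu N s Ω u x‖ₑ ^ 2 ≤
      ‖cNs N s‖ₑ ^ 2 * energyDensity N s Ω u x * kernMass N s Ω x := by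
  rw [Nneu, enorm_mul, mul_pow, mul_assoc]
  gcongr
  exact (pow_le_pow_left₀ zero_le (enorm_integral_le_lintegral_enorm _) 2).trans
    (sq_lintegral_enorm_div_kern_le hu x)

lemma lintegral_enorm_Nneu_sq_div_kernMass_le (hu : Measurable u) :
    ∫⁻ x in (closure Ω)ᶜ, ‖Nneu N s Ω u x‖ₑ ^ 2 / kernMass N s Ω x ≤
      ‖cNs N s‖ₑ ^ 2 * semiSq N s Ω u :=
  calc ∫⁻ x in (closure Ω)ᶜ, ‖Nneu N s Ω u x‖ₑ ^ 2 / kernMass N s Ω x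
      ≤ ∫⁻ x in (closure Ω)ᶜ, ‖cNs N s‖ₑ ^ 2 * energyDensity N s Ω u x :=
        lintegral_mono fun x => ENNReal.div_le_of_le_mul (enorm_Nneu_sq_le hu x)
    _ = ‖cNs N s‖ₑ ^ 2 * ∫⁻ x in (closure Ω)ᶜ, energyDensity N s Ω u x :=
        lintegral_const_mul _ (by fun_prop)
    _ ≤ ‖cNs N s‖ₑ ^ 2 * semiSq N s Ω u := by
        gcongr
        exact lintegral_energyDensity_le_semiSq hu

lemma memHs.ae_integrable_div_kern (hs : 0 < s) (hu : memHs N s Ω u) :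
    ∀ᵐ x ∂volume.restrict (closure Ω)ᶜ,
      IntegrableOn (fun y => (u x - u y) / kern N s x y) Ω := by
  obtain ⟨hu_meas, -, hu_semi⟩ := hu
  have henergy : ∀ᵐ x ∂volume.restrict (closure Ω)ᶜ, energyDensity N s Ω u x < ⊤ :=
    ae_lt_top (by fun_prop) ((lintegral_energyDensity_le_semiSq hu_meas).trans_lt hu_semi).ne
  filter_upwards [henergy, ae_restrict_compl_closure_notMem] with x hx hxΩ
  have hmeas : Measurable fun y => (u x - u y) / kern N s x y := by fun_prop
  refine ⟨hmeas.aestronglyMeasurable, (ENNReal.pow_lt_top_iff.1 ?_).resolve_right two_ne_zero⟩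
  exact (sq_lintegral_enorm_div_kern_le hu_meas x).trans_lt
    (ENNReal.mul_lt_top hx (kernMass_lt_top hs hxΩ))

lemma memHs.Nneu_linearCombination (hs : 0 < s) (hu : memHs N s Ω u) (hv : memHs N s Ω v)
    (a b : ℝ) : ∀ᵐ x ∂volume.restrict (closure Ω)ᶜ,
      Nneu N s Ω (fun z => a * u z + b * v z) x = a * Nneu N s Ω u x + b * Nneu N s Ω v x := by
  filter_upwards [hu.ae_integrable_div_kern hs, hv.ae_integrable_div_kern hs] with x hux hvx
  have hsplit (y : Euc N) : ((a * u x + b * v x) - (a * u y + b * v y)) / kern N s x y =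
      a * ((u x - u y) / kern N s x y) + b * ((v x - v y) / kern N s x y) := by ring
  simp only [Nneu, hsplit]
  rw [integral_add (hux.const_mul a) (hvx.const_mul b), integral_const_mul, integral_const_mul]
  ring

lemma memHsTilde.linearCombination (hs : 0 < s) (hu : memHsTilde N s Ω u)
    (hv : memHsTilde N s Ω v) (a b : ℝ) : memHsTilde N s Ω fun x => a * u x + b * v x := by
  refine ⟨hu.1.linearCombination hv.1 a b, ?_⟩
  filter_upwards [hu.1.Nneu_linearCombination hs hv.1 a b, hu.2, hv.2] with x hx hux hvx
  simp [hx, hux, hvx]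

lemma memHsTilde.Nneu_sub (hs : 0 < s) (hv : memHsTilde N s Ω v) (hu : memHs N s Ω u) :
    ∀ᵐ x ∂volume.restrict (closure Ω)ᶜ,
      Nneu N s Ω (fun z => v z - u z) x = -Nneu N s Ω u x := by
  filter_upwards [hv.1.Nneu_linearCombination hs hu 1 (-1), hv.2] with x hx hvx
  simpa [hvx, ← sub_eq_add_neg] using hx

lemma ae_Nneu_eq_zero_of_lintegral_eq_zero (hs : 0 < s) (hu : Measurable u)
    (h : ∫⁻ x in (closure Ω)ᶜ, ‖Nneu N s Ω u x‖ₑ ^ 2 / kernMass N s Ω x = 0) :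
    ∀ᵐ x ∂volume.restrict (closure Ω)ᶜ, Nneu N s Ω u x = 0 := by
  rw [lintegral_eq_zero_iff (by fun_prop)] at h
  filter_upwards [h, ae_restrict_compl_closure_notMem] with x hx hxΩ
  have hsq : ‖Nneu N s Ω u x‖ₑ ^ 2 = 0 :=
    (ENNReal.div_eq_zero_iff.1 hx).resolve_right (kernMass_lt_top hs hxΩ).ne
  simpa using hsq

lemma memHsTilde_of_tendsto_semiSq {ι : Type*} {l : Filter ι} [l.NeBot] {uk : ι → Euc N → ℝ}
    (hs : 0 < s) (huk : ∀ k, memHsTilde N s Ω (uk k)) (hu : memHs N s Ω u)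
    (hlim : Tendsto (fun k => semiSq N s Ω fun x => uk k x - u x) l (𝓝 0)) :
    memHsTilde N s Ω u := by
  have hle (k : ι) : ∫⁻ x in (closure Ω)ᶜ, ‖Nneu N s Ω u x‖ₑ ^ 2 / kernMass N s Ω x ≤
      ‖cNs N s‖ₑ ^ 2 * semiSq N s Ω fun x => uk k x - u x := by
    refine (lintegral_congr_ae ?_).trans_le
      (lintegral_enorm_Nneu_sq_div_kernMass_le ((huk k).1.sub hu).1)
    filter_upwards [(huk k).Nneu_sub hs hu] with x hx
    rw [hx, enorm_neg]
  have hlim' : Tendsto (fun k => ‖cNs N s‖ₑ ^ 2 * semiSq N s Ω fun x => uk k x - u x) l (𝓝 0) := by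
    simpa using ENNReal.Tendsto.const_mul hlim (Or.inr (ENNReal.pow_ne_top enorm_ne_top))
  have hzero := le_antisymm (ge_of_tendsto' hlim' hle) zero_le
  exact ⟨hu, ae_Nneu_eq_zero_of_lintegral_eq_zero hs hu.1 hzero⟩

end Neumann

lemma tendsto_zero_of_tendsto_add_sqrt_toReal {ι : Type*} {l : Filter ι} {f : ι → ℝ}
    {g : ι → ℝ≥0∞} (hf : ∀ k, 0 ≤ f k) (hg : ∀ k, g k ≠ ⊤)
    (h : Tendsto (fun k => f k + √(g k).toReal) l (𝓝 0)) : Tendsto g l (𝓝 0) := by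
  have hsqrt : Tendsto (fun k => √(g k).toReal) l (𝓝 0) :=
    squeeze_zero (fun k => Real.sqrt_nonneg _) (fun k => le_add_of_nonneg_left (hf k)) h
  have hreal : Tendsto (fun k => (g k).toReal) l (𝓝 0) := by
    simpa [Real.sq_sqrt] using hsqrt.pow 2
  exact (ENNReal.tendsto_toReal_iff hg ENNReal.zero_ne_top).1 hreal

theorem statement3_general (N : ℕ) {s : ℝ} (hs : 0 < s) (Ω : Set (Euc N)) :
    (∀ (u v : Euc N → ℝ) (a b : ℝ), memHsTilde N s Ω u → memHsTilde N s Ω v →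
      memHsTilde N s Ω (fun x => a * u x + b * v x)) ∧
    (∀ (uk : ℕ → Euc N → ℝ) (u : Euc N → ℝ),
      (∀ k, memHsTilde N s Ω (uk k)) → memHs N s Ω u →
      Tendsto (fun k => semiSq N s Ω (fun x => uk k x - u x)) atTop (𝓝 0) →
      memHsTilde N s Ω u) :=
  ⟨fun _ _ a b hu hv => hu.linearCombination hs hv a b,
    fun _ _ huk hu hlim => memHsTilde_of_tendsto_semiSq hs huk hu hlim⟩

/-- Proposition 2.4: `H̃^s_{Ω,0}` is a linear subspace of `H^s_{Ω,0}` which is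
closed with respect to the norm `u ↦ ‖u‖_{L²(Ω)} + [u]_{H^s_{Ω,0}}`. -/
theorem statement3 (N : ℕ) (hN : 2 ≤ N) (s : ℝ) (hs : s ∈ Set.Ioo (0 : ℝ) 1)
    (Ω : Set (Euc N)) (hΩ : IsLipschitzDomain N Ω) :
    (∀ (u v : Euc N → ℝ) (a b : ℝ), memHsTilde N s Ω u → memHsTilde N s Ω v →
      memHsTilde N s Ω (fun x => a * u x + b * v x)) ∧
    (∀ (uk : ℕ → Euc N → ℝ) (u : Euc N → ℝ),
      (∀ k, memHsTilde N s Ω (uk k)) → memHs N s Ω u →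
      Filter.Tendsto (fun k =>
          Real.sqrt ((l2sq N Ω (fun x => uk k x - u x)).toReal) +
          Real.sqrt ((semiSq N s Ω (fun x => uk k x - u x)).toReal))
        Filter.atTop (nhds 0) →
      memHsTilde N s Ω u) := by
  refine (statement3_general N hs.1 Ω).imp_right fun hclosed uk u huk hu hlim => ?_
  exact hclosed uk u huk hu (tendsto_zero_of_tendsto_add_sqrt_toReal
    (fun _ => Real.sqrt_nonneg _) (fun k => ((huk k).1.sub hu).2.2.ne) hlim)

end FracNeumann
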